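/- Let Ω ⊂ X be an open set and let u ∈ L^1_loc(Ω) with ‖Du‖(Ω) < ∞. Then there exists a sequence (w_i) of locally Lipschitz functions on Ω with w_i − u → 0 in L^1(Ω) and ∫_Ω g_{w_i} dμ → ‖Du‖(Ω), where g_{w_i} is the minimal 1-weak upper gradient of w_i in Ω. -/

import Mathlib

open MeasureTheory Filter Metric Set
open scoped Topology ENNReal NNReal symmDiff

noncomputable section

namespace PaperBV

/-- A rectifiable curve parametrized by arc-length: a `1`-Lipschitz map on `[0, len]`. -/
structure Curve (X : Type*) [MetricSpace X] where
  len : ℝ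
  len_nonneg : 0 ≤ len
  toFun : ℝ → X
  lip : LipschitzOnWith 1 toFun (Set.Icc 0 len)

variable {X : Type*} [MetricSpace X] [MeasurableSpace X] [BorelSpace X]

/-- The curve lies in the set `A`. -/
def Curve.In (γ : Curve X) (A : Set X) : Prop :=
  ∀ t ∈ Set.Icc (0 : ℝ) γ.len, γ.toFun t ∈ A

/-- The curve integral `∫_γ g ds` of a nonnegative function, for an
arc-length parametrized curve. -/
def Curve.integral (γ : Curve X) (g : X → ℝ≥0∞) : ℝ≥0∞ :=
  ∫⁻ t in Set.Icc (0 : ℝ) γ.len, g (γ.toFun t)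

/-- The upper gradient inequality `|u(x) - u(y)| ≤ ∫_γ g ds` along the curve `γ`,
where `x, y` are the endpoints of `γ`. -/
def UGIneq (u : X → ℝ) (g : X → ℝ≥0∞) (γ : Curve X) : Prop :=
  ENNReal.ofReal |u (γ.toFun 0) - u (γ.toFun γ.len)| ≤ γ.integral g

/-- `g` is an upper gradient of `u` on `X`: `g` is nonnegative (automatic in `ℝ≥0∞`),
Borel, and the upper gradient inequality holds along every curve. -/
def IsUpperGradient (u : X → ℝ) (g : X → ℝ≥0∞) : Prop :=
  Measurable g ∧ ∀ γ : Curve X, UGIneq u g γ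

/-- A family of curves has zero `1`-modulus: there is a nonnegative Borel function
`ρ ∈ L¹(X)` whose curve integral is infinite along every curve of the family. -/
def ZeroMod (μ : Measure X) (Γ : Set (Curve X)) : Prop :=
  ∃ ρ : X → ℝ≥0∞, Measurable ρ ∧ (∫⁻ x, ρ x ∂μ) < ∞ ∧ ∀ γ ∈ Γ, γ.integral ρ = ∞

/-- `g` is a `1`-weak upper gradient of `u` in `A`: `g` is nonnegative, `μ`-measurable,
and the upper gradient inequality holds along `1`-a.e. curve in `A`. -/
def IsWeakUpperGradientOn (μ : Measure X) (u : X → ℝ) (g : X → ℝ≥0∞) (A : Set X) : Prop :=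
  AEMeasurable g μ ∧ ZeroMod μ {γ : Curve X | γ.In A ∧ ¬ UGIneq u g γ}

/-- A nonnegative function `g` belongs to `L¹_loc(A)`. -/
def LIntegrableLocOn (μ : Measure X) (g : X → ℝ≥0∞) (A : Set X) : Prop :=
  ∀ x ∈ A, ∃ r > (0 : ℝ), (∫⁻ y in A ∩ Metric.ball x r, g y ∂μ) < ∞

/-- `g` is the minimal `1`-weak upper gradient of `u` in `A`: a `1`-weak upper gradient
satisfying `g ≤ g'` `μ`-a.e. in `A` for every `1`-weak upper gradient `g' ∈ L¹_loc(A)`. -/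
def IsMinimalWUG (μ : Measure X) (u : X → ℝ) (g : X → ℝ≥0∞) (A : Set X) : Prop :=
  IsWeakUpperGradientOn μ u g A ∧
    ∀ g' : X → ℝ≥0∞, IsWeakUpperGradientOn μ u g' A → LIntegrableLocOn μ g' A →
      ∀ᵐ x ∂(μ.restrict A), g x ≤ g' x

/-- The Newtonian norm `‖u‖_{N^{1,1}(A)}` (valued in `ℝ≥0∞`). -/
def NNorm (μ : Measure X) (A : Set X) (u : X → ℝ) : ℝ≥0∞ :=
  (∫⁻ x in A, ENNReal.ofReal |u x| ∂μ) +
    ⨅ (g : X → ℝ≥0∞) (_ : IsWeakUpperGradientOn μ u g A), ∫⁻ x in A, g x ∂μ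

/-- `u ∈ N^{1,1}(A)`. -/
def MemN11 (μ : Measure X) (A : Set X) (u : X → ℝ) : Prop :=
  NNorm μ A u < ∞

/-- `u ∈ N^{1,1}_loc(A)`: every point of `A` has a ball `B` with `u ∈ N^{1,1}(A ∩ B)`. -/
def MemN11Loc (μ : Measure X) (A : Set X) (u : X → ℝ) : Prop :=
  ∀ x ∈ A, ∃ r > (0 : ℝ), NNorm μ (A ∩ Metric.ball x r) u < ∞

/-- `u ∈ N^{1,1}(Ω')` for every bounded open `Ω' ⊆ X`. -/
def MemN11LocBounded (μ : Measure X) (u : X → ℝ) : Prop :=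
  ∀ Ω' : Set X, IsOpen Ω' → Bornology.IsBounded Ω' → NNorm μ Ω' u < ∞

/-- `u ∈ N^{1,1}_0(Ω)`: `u ∈ N^{1,1}(X)` and `u = 0` outside `Ω`. -/
def MemN110 (μ : Measure X) (Ω : Set X) (u : X → ℝ) : Prop :=
  MemN11 μ Set.univ u ∧ ∀ x ∉ Ω, u x = 0

/-- The `1`-capacity `capa₁(A) = inf {‖u‖_{N^{1,1}(X)} : u ∈ N^{1,1}(X), u ≥ 1 on A}`. -/
def capa1 (μ : Measure X) (A : Set X) : ℝ≥0∞ :=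
  ⨅ (u : X → ℝ) (_ : MemN11 μ Set.univ u) (_ : ∀ x ∈ A, 1 ≤ u x), NNorm μ Set.univ u

/-- `U` is `1`-quasiopen: for every `ε > 0` there is an open `G` with `capa₁(G) < ε`
such that `U ∪ G` is open. -/
def QuasiOpen (μ : Measure X) (U : Set X) : Prop :=
  ∀ ε : ℝ, 0 < ε → ∃ G : Set X, IsOpen G ∧ capa1 μ G < ENNReal.ofReal ε ∧ IsOpen (U ∪ G)

/-- `u ∈ L¹_loc(A)`. -/
def MemL1Loc (μ : Measure X) (A : Set X) (u : X → ℝ) : Prop :=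
  AEMeasurable u (μ.restrict A) ∧
    ∀ x ∈ A, ∃ r > (0 : ℝ), (∫⁻ y in A ∩ Metric.ball x r, ENNReal.ofReal |u y| ∂μ) < ∞

/-- `v i → u` in `L¹_loc(A)`: every `x ∈ A` has a ball `B` with `v i → u` in `L¹(A ∩ B)`. -/
def L1LocConv (μ : Measure X) (A : Set X) (v : ℕ → X → ℝ) (u : X → ℝ) : Prop :=
  ∀ x ∈ A, ∃ r > (0 : ℝ),
    Filter.Tendsto (fun i => ∫⁻ y in A ∩ Metric.ball x r, ENNReal.ofReal |v i y - u y| ∂μ)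
      Filter.atTop (𝓝 0)

/-- `u` is locally Lipschitz on `Ω`. -/
def LocLipOn (u : X → ℝ) (Ω : Set X) : Prop :=
  ∀ x ∈ Ω, ∃ r > (0 : ℝ), ∃ K : ℝ≥0, LipschitzOnWith K u (Ω ∩ Metric.ball x r)

/-- The total variation `‖Du‖(Ω)` of `u` in an open set `Ω`: the infimum of
`liminf_i ∫_Ω g_{v i} dμ` over sequences of locally Lipschitz functions `v i → u`
in `L¹_loc(Ω)`, where `g_{v i}` is the minimal `1`-weak upper gradient of `v i` in `Ω`. -/
def tvOpen (μ : Measure X) (Ω : Set X) (u : X → ℝ) : ℝ≥0∞ :=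
  ⨅ (v : ℕ → X → ℝ) (g : ℕ → X → ℝ≥0∞) (_ : ∀ i, LocLipOn (v i) Ω)
    (_ : ∀ i, IsMinimalWUG μ (v i) (g i) Ω) (_ : L1LocConv μ Ω v u),
    Filter.liminf (fun i => ∫⁻ x in Ω, g i x ∂μ) Filter.atTop

/-- The total variation `‖Du‖(A)` of `u` in an arbitrary set `A`:
`inf {‖Du‖(Ω) : Ω ⊇ A open}`. -/
def tv (μ : Measure X) (A : Set X) (u : X → ℝ) : ℝ≥0∞ :=
  ⨅ (Ω : Set X) (_ : IsOpen Ω) (_ : A ⊆ Ω), tvOpen μ Ω u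

/-- The perimeter `P(E, A) = ‖Dχ_E‖(A)` for arbitrary `A`. -/
def perim (μ : Measure X) (E A : Set X) : ℝ≥0∞ :=
  tv μ A (Set.indicator E (fun _ => (1 : ℝ)))

/-- The perimeter `P(E, Ω) = ‖Dχ_E‖(Ω)` for open `Ω`. -/
def perimOpen (μ : Measure X) (E Ω : Set X) : ℝ≥0∞ :=
  tvOpen μ Ω (Set.indicator E (fun _ => (1 : ℝ)))

/-- The measure `μ` is doubling with constant `Cd`. -/
def Doubling (μ : Measure X) (Cd : ℝ) : Prop :=
  1 ≤ Cd ∧ ∀ (x : X) (r : ℝ), 0 < r →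
    0 < μ (Metric.ball x (2 * r)) ∧
      μ (Metric.ball x (2 * r)) ≤ ENNReal.ofReal Cd * μ (Metric.ball x r) ∧
      μ (Metric.ball x r) < ∞

/-- The space supports a `(1,1)`-Poincaré inequality with constants `CP, lam`. -/
def Poincare (μ : Measure X) (CP lam : ℝ) : Prop :=
  1 ≤ CP ∧ 1 ≤ lam ∧ ∀ (x : X) (r : ℝ), 0 < r → ∀ (u : X → ℝ) (g : X → ℝ≥0∞),
    MemL1Loc μ Set.univ u → IsUpperGradient u g →
      ENNReal.ofReal (⨍ y in Metric.ball x r, |u y - ⨍ z in Metric.ball x r, u z ∂μ| ∂μ)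
        ≤ ENNReal.ofReal (CP * r) *
            ((∫⁻ y in Metric.ball x (lam * r), g y ∂μ) / μ (Metric.ball x (lam * r)))

/-- The restricted spherical Hausdorff content of codimension one. -/
def HR (μ : Measure X) (R : ℝ) (A : Set X) : ℝ≥0∞ :=
  ⨅ (c : ℕ → X) (r : ℕ → ℝ) (_ : ∀ i, 0 < r i ∧ r i ≤ R)
    (_ : A ⊆ ⋃ i, Metric.ball (c i) (r i)),
    ∑' i, μ (Metric.ball (c i) (r i)) / ENNReal.ofReal (r i)

/-- The codimension-one Hausdorff measure `H(A) = lim_{R → 0} H_R(A)`. -/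
def Hcodim (μ : Measure X) (A : Set X) : ℝ≥0∞ :=
  ⨆ (R : ℝ) (_ : 0 < R), HR μ R A

/-- The lower approximate limit `u^∧`. -/
def lowerApprox (μ : Measure X) (u : X → ℝ) (x : X) : EReal :=
  sSup ((fun t : ℝ => (t : EReal)) ''
    {t : ℝ | Filter.Tendsto
      (fun r => μ (Metric.ball x r ∩ {y | u y < t}) / μ (Metric.ball x r))
      (𝓝[>] (0 : ℝ)) (𝓝 0)})

/-- The upper approximate limit `u^∨`. -/
def upperApprox (μ : Measure X) (u : X → ℝ) (x : X) : EReal :=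
  sInf ((fun t : ℝ => (t : EReal)) ''
    {t : ℝ | Filter.Tendsto
      (fun r => μ (Metric.ball x r ∩ {y | t < u y}) / μ (Metric.ball x r))
      (𝓝[>] (0 : ℝ)) (𝓝 0)})

/-- `u ∈ BV_loc(X)`: `u ∈ L¹_loc(X)` with `‖Du‖(Ω') < ∞` for every bounded open `Ω'`. -/
def MemBVLoc (μ : Measure X) (u : X → ℝ) : Prop :=
  MemL1Loc μ Set.univ u ∧
    ∀ Ω' : Set X, IsOpen Ω' → Bornology.IsBounded Ω' → tvOpen μ Ω' u < ∞

/-- The measure-theoretic interior `I_E`. -/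
def mInterior (μ : Measure X) (E : Set X) : Set X :=
  {x | Filter.Tendsto (fun r => μ (Metric.ball x r \ E) / μ (Metric.ball x r))
    (𝓝[>] (0 : ℝ)) (𝓝 0)}

/-- The measure-theoretic exterior `O_E`. -/
def mExterior (μ : Measure X) (E : Set X) : Set X :=
  {x | Filter.Tendsto (fun r => μ (Metric.ball x r ∩ E) / μ (Metric.ball x r))
    (𝓝[>] (0 : ℝ)) (𝓝 0)}

/-- The measure-theoretic boundary `∂*E`: the points where both `E` and its complement
have positive upper density. -/
def mBoundary (μ : Measure X) (E : Set X) : Set X :=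
  {x | 0 < Filter.limsup (fun r => μ (Metric.ball x r ∩ E) / μ (Metric.ball x r))
        (𝓝[>] (0 : ℝ)) ∧
       0 < Filter.limsup (fun r => μ (Metric.ball x r \ E) / μ (Metric.ball x r))
        (𝓝[>] (0 : ℝ))}


set_option linter.unusedSectionVars false

theorem sigmaFinite_of_doubling (μ : Measure X) (h : ∃ Cd : ℝ, Doubling μ Cd) :
    SigmaFinite μ := by
  obtain ⟨Cd, hC⟩ := h
  rcases isEmpty_or_nonempty X with hX | ⟨⟨x0⟩⟩
  · have : μ = 0 := Measure.eq_zero_of_isEmpty μ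
    rw [this]; infer_instance
  · refine ⟨⟨⟨fun n : ℕ => Metric.ball x0 ((n : ℝ) + 1), fun n => trivial,
      fun n => (hC.2 x0 _ (by positivity)).2.2, ?_⟩⟩⟩
    rw [Set.eq_univ_iff_forall]
    intro x
    obtain ⟨n, hn⟩ := exists_nat_gt (dist x x0)
    exact Set.mem_iUnion.2 ⟨n, by rw [Metric.mem_ball]; linarith⟩

theorem secondCountable_of_doubling (μ : Measure X) (h : ∃ Cd : ℝ, Doubling μ Cd) :
    SecondCountableTopology X := by
  have hσ := sigmaFinite_of_doubling μ h
  obtain ⟨Cd, hC⟩ := h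
  refine Metric.secondCountable_of_almost_dense_set fun ε hε => ?_
  obtain ⟨s, -, hdis, hcov⟩ := Vitali.exists_disjoint_subfamily_covering_enlargement_closedBall
    (Set.univ : Set X) (fun x => x) (fun _ => ε / 4) (ε / 4) (fun _ _ => le_rfl) 4 (by norm_num)
  refine ⟨s, ?_, fun x => ?_⟩
  · have h1 := Measure.countable_meas_pos_of_disjoint_iUnion (μ := μ)
      (As := fun i : s => Metric.closedBall (i : X) (ε / 4))
      (fun i => Metric.isClosed_closedBall.measurableSet)
      (fun i j hij => hdis i.2 j.2 (fun h => hij (Subtype.ext h)))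
    have h2 : {i : s | 0 < μ (Metric.closedBall (i : X) (ε / 4))} = Set.univ := by
      rw [Set.eq_univ_iff_forall]
      intro i
      have h3 := (hC.2 (i : X) (ε / 8) (by positivity)).1
      refine h3.trans_le (measure_mono ?_)
      refine Metric.ball_subset_closedBall.trans (Metric.closedBall_subset_closedBall ?_)
      linarith
    rw [h2, Set.countable_univ_iff] at h1
    exact Set.countable_coe_iff.1 h1
  · obtain ⟨b, hb, hsub⟩ := hcov x trivial
    refine ⟨b, hb, ?_⟩
    have := hsub (Metric.mem_closedBall_self (by positivity))
    rw [Metric.mem_closedBall] at this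
    linarith

theorem ZeroMod.mono {μ : Measure X} {Γ Γ' : Set (Curve X)} (h : ZeroMod μ Γ') (hs : Γ ⊆ Γ') :
    ZeroMod μ Γ := by
  obtain ⟨ρ, h1, h2, h3⟩ := h
  exact ⟨ρ, h1, h2, fun γ hγ => h3 γ (hs hγ)⟩

theorem ZeroMod.iUnion {μ : Measure X} {Γ : ℕ → Set (Curve X)} (h : ∀ n, ZeroMod μ (Γ n)) :
    ZeroMod μ (⋃ n, Γ n) := by
  choose ρ h1 h2 h3 using h
  obtain ⟨δ, hδ, hs⟩ := ENNReal.exists_pos_tsum_mul_lt_of_countable (ε := 1) one_ne_zero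
    (fun n => ∫⁻ x, ρ n x ∂μ) (fun n => (h2 n).ne)
  refine ⟨fun x => ∑' n, (δ n : ℝ≥0∞) * ρ n x,
    Measurable.tsum (fun n => (h1 n).const_mul _), ?_, ?_⟩
  · rw [lintegral_tsum (fun n => ((h1 n).const_mul _).aemeasurable)]
    refine lt_of_le_of_lt (le_of_eq (tsum_congr fun n => ?_)) (hs.trans ENNReal.one_lt_top)
    rw [lintegral_const_mul _ (h1 n), mul_comm]
  · intro γ hγ
    obtain ⟨n, hn⟩ := Set.mem_iUnion.1 hγ
    have h4 := h3 n γ hn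
    rw [eq_top_iff]
    have h5 : ∞ = γ.integral (fun x => (δ n : ℝ≥0∞) * ρ n x) := by
      unfold Curve.integral at h4 ⊢
      rw [lintegral_const_mul' _ _ ENNReal.coe_ne_top, h4, ENNReal.mul_top]
      exact_mod_cast (hδ n).ne'
    rw [h5]
    exact lintegral_mono fun t => ENNReal.le_tsum (f := fun n => (δ n : ℝ≥0∞) * ρ n (γ.toFun t)) n

theorem ZeroMod.union {μ : Measure X} {Γ Γ' : Set (Curve X)} (h : ZeroMod μ Γ)
    (h' : ZeroMod μ Γ') : ZeroMod μ (Γ ∪ Γ') := by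
  refine (ZeroMod.iUnion (Γ := fun n => if n = 0 then Γ else Γ') (fun n => ?_)).mono ?_
  · by_cases hn : n = 0 <;> simp [hn, h, h']
  · rintro γ (hγ | hγ)
    · exact Set.mem_iUnion.2 ⟨0, by simpa using hγ⟩
    · exact Set.mem_iUnion.2 ⟨1, by simpa using hγ⟩

theorem zeroMod_of_fun {μ : Measure X} {ρ : X → ℝ≥0∞} (h1 : Measurable ρ)
    (h2 : (∫⁻ x, ρ x ∂μ) < ∞) : ZeroMod μ {γ : Curve X | γ.integral ρ = ∞} :=
  ⟨ρ, h1, h2, fun _ h => h⟩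

/-- Extension of a curve to the real line by constants. -/
def Curve.ext (γ : Curve X) (t : ℝ) : X := γ.toFun (Set.projIcc 0 γ.len γ.len_nonneg t)

theorem Curve.ext_eq (γ : Curve X) {t : ℝ} (ht : t ∈ Set.Icc 0 γ.len) : γ.ext t = γ.toFun t := by
  unfold Curve.ext
  rw [Set.projIcc_of_mem _ ht]

theorem Curve.lipschitz_ext (γ : Curve X) : LipschitzWith 1 γ.ext := by
  have h := γ.lip.to_restrict.comp (LipschitzWith.projIcc γ.len_nonneg)
  rw [one_mul] at h
  exact h

theorem Curve.ext_mem (γ : Curve X) {A : Set X} (h : γ.In A) (t : ℝ) : γ.ext t ∈ A :=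
  h _ (Set.projIcc 0 γ.len γ.len_nonneg t).2

theorem Curve.integral_eq (γ : Curve X) (g : X → ℝ≥0∞) :
    γ.integral g = ∫⁻ t in Set.Icc (0 : ℝ) γ.len, g (γ.ext t) := by
  refine setLIntegral_congr_fun measurableSet_Icc fun t ht => ?_
  simp only [γ.ext_eq ht]

/-- Restriction of a curve to `[a,b]`. -/
def Curve.sub (γ : Curve X) (a b : ℝ) (hab : a ≤ b) : Curve X where
  len := b - a
  len_nonneg := by linarith
  toFun := fun s => γ.ext (a + s)
  lip := by
    have h : LipschitzWith 1 (fun s : ℝ => a + s) := by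
      refine LipschitzWith.of_dist_le_mul fun x y => by simp
    have h2 := γ.lipschitz_ext.comp h
    rw [one_mul] at h2
    exact h2.lipschitzOnWith

theorem Curve.sub_integral (γ : Curve X) (a b : ℝ) (hab : a ≤ b) (g : X → ℝ≥0∞) :
    (γ.sub a b hab).integral g = ∫⁻ t in Set.Icc a b, g (γ.ext t) := by
  have h := (measurePreserving_add_left (volume : Measure ℝ) a).setLIntegral_comp_preimage_emb
    (measurableEmbedding_addLeft a) (fun t => g (γ.ext t)) (Set.Icc a b)
  rw [Set.preimage_const_add_Icc, sub_self] at h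
  exact h

theorem LocLipOn.locallyLipschitzOn {u : X → ℝ} {Ω : Set X} (h : LocLipOn u Ω) :
    LocallyLipschitzOn Ω u := by
  intro x hx
  obtain ⟨r, hr, K, hK⟩ := h x hx
  exact ⟨K, _, Filter.inter_mem self_mem_nhdsWithin
    (mem_nhdsWithin_of_mem_nhds (Metric.ball_mem_nhds x hr)), hK⟩

theorem LocLipOn.continuousOn {u : X → ℝ} {Ω : Set X} (h : LocLipOn u Ω) :
    ContinuousOn u Ω := h.locallyLipschitzOn.continuousOn

theorem LocLipOn.lip_comp {u : X → ℝ} {Ω : Set X} (h : LocLipOn u Ω) (γ : Curve X)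
    (hγ : γ.In Ω) : ∃ K : ℝ≥0, LipschitzWith K (fun t => u (γ.ext t)) := by
  have hc : IsCompact (Set.range γ.ext) := by
    have : Set.range γ.ext = γ.ext '' Set.Icc 0 γ.len := by
      apply Set.Subset.antisymm
      · rintro _ ⟨t, rfl⟩
        refine ⟨Set.projIcc 0 γ.len γ.len_nonneg t, Subtype.coe_prop _, ?_⟩
        unfold Curve.ext
        simp
      · rintro _ ⟨t, -, rfl⟩; exact ⟨t, rfl⟩
    rw [this]
    exact isCompact_Icc.image γ.lipschitz_ext.continuous
  have hs : Set.range γ.ext ⊆ Ω := by rintro _ ⟨t, rfl⟩; exact γ.ext_mem hγ t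
  obtain ⟨K, hK⟩ := (h.locallyLipschitzOn.mono hs).exists_lipschitzOnWith_of_compact hc
  refine ⟨K * 1, ?_⟩
  rw [← lipschitzOnWith_univ]
  exact hK.comp (γ.lipschitz_ext.lipschitzOnWith) (fun t _ => ⟨t, rfl⟩)

/-- Derivative bound along a.e. curve. -/
def Strong (μ : Measure X) (u : X → ℝ) (g : X → ℝ≥0∞) (A : Set X) : Prop :=
  AEMeasurable g μ ∧ ZeroMod μ {γ : Curve X | γ.In A ∧
    ¬ ∀ᵐ t ∂((volume : Measure ℝ).restrict (Set.Icc 0 γ.len)),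
      ENNReal.ofReal |deriv (fun s => u (γ.ext s)) t| ≤ g (γ.ext t)}

theorem Strong.weak {μ : Measure X} {u : X → ℝ} {g : X → ℝ≥0∞} {A : Set X}
    (h : Strong μ u g A) (hu : LocLipOn u A) : IsWeakUpperGradientOn μ u g A := by
  refine ⟨h.1, h.2.mono ?_⟩
  rintro γ ⟨hin, hne⟩
  refine ⟨hin, fun hd => hne ?_⟩
  obtain ⟨K, hK⟩ := hu.lip_comp γ hin
  have hac := (hK.lipschitzOnWith (s := Set.uIcc 0 γ.len)).absolutelyContinuousOnInterval
  have hI := hac.integral_deriv_eq_sub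
  unfold UGIneq
  rw [γ.integral_eq, ← γ.ext_eq (Set.left_mem_Icc.2 γ.len_nonneg),
    ← γ.ext_eq (Set.right_mem_Icc.2 γ.len_nonneg), abs_sub_comm]
  rw [← hI, intervalIntegral.integral_of_le γ.len_nonneg, ← integral_Icc_eq_integral_Ioc,
    ← Real.enorm_eq_ofReal_abs]
  refine (enorm_integral_le_lintegral_enorm _).trans (lintegral_mono_ae ?_)
  filter_upwards [hd] with t ht
  rwa [Real.enorm_eq_ofReal_abs]

theorem deriv_le_of_local {U Φ : ℝ → ℝ} {t c : ℝ} (hΦ : HasDerivAt Φ c t)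
    (h : ∀ᶠ s in 𝓝[>] t, |U s - U t| ≤ Φ s - Φ t) (hc : 0 ≤ c) : |deriv U t| ≤ c := by
  by_cases hd : DifferentiableAt ℝ U t
  · have h1 := (hasDerivAt_iff_tendsto_slope.1 hd.hasDerivAt).mono_left
      (nhdsWithin_mono t (show Set.Ioi t ⊆ {t}ᶜ from fun s hs => ne_of_gt hs))
    have h2 := (hasDerivAt_iff_tendsto_slope.1 hΦ).mono_left
      (nhdsWithin_mono t (show Set.Ioi t ⊆ {t}ᶜ from fun s hs => ne_of_gt hs))
    refine le_of_tendsto_of_tendsto h1.abs h2 ?_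
    filter_upwards [h, self_mem_nhdsWithin] with s hs hts
    have hpos : 0 < s - t := sub_pos.2 hts
    rw [slope_def_field, slope_def_field, abs_div, abs_of_pos hpos]
    gcongr
  · rw [deriv_zero_of_not_differentiableAt hd]; simpa using hc

theorem IsWeakUpperGradientOn.strong [SecondCountableTopology X] {μ : Measure X} {u : X → ℝ}
    {g : X → ℝ≥0∞} {A : Set X} (hA : IsOpen A)
    (h : IsWeakUpperGradientOn μ u g A) (hg : LIntegrableLocOn μ g A) : Strong μ u g A := by
  obtain ⟨hm, ρ0, hρm, hρi, hρ⟩ := h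
  refine ⟨hm, ?_⟩
  -- countable cover
  choose! r hr hri using hg
  obtain ⟨T, hTA, hTc, hTcov⟩ := TopologicalSpace.countable_cover_nhdsWithin
    (s := A) (f := fun x => Metric.ball x (r x))
    (fun x hx => mem_nhdsWithin_of_mem_nhds (Metric.ball_mem_nhds x (hr x hx)))
  rcases Set.eq_empty_or_nonempty T with hT | hT
  · refine zeroMod_of_fun (ρ := fun _ => 0) measurable_const (by simp) |>.mono ?_
    rintro γ ⟨hin, -⟩
    have := hTcov (γ.ext_mem hin 0)
    simp [hT] at this
  obtain ⟨c, hc⟩ := hTc.exists_eq_range hT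
  have hcA : ∀ i, c i ∈ A := fun i => hTA (hc ▸ ⟨i, rfl⟩)
  set B : ℕ → Set X := fun i => Metric.ball (c i) (r (c i)) with hB
  have hcov : ∀ x ∈ A, ∃ i, x ∈ B i := by
    intro x hx
    obtain ⟨y, hy, hxy⟩ := Set.mem_iUnion₂.1 (hTcov hx)
    rw [hc] at hy
    obtain ⟨i, rfl⟩ := hy
    exact ⟨i, hxy⟩
  -- Borel representative
  obtain ⟨g', hg'm, hgg'⟩ := hm
  obtain ⟨N, hNs, hNm, hN0⟩ := exists_measurable_superset_of_null (ae_iff.1 hgg')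
  have hNz : ZeroMod μ {γ : Curve X | γ.integral (N.indicator fun _ => ∞) = ∞} := by
    refine zeroMod_of_fun (measurable_const.indicator hNm) ?_
    rw [lintegral_indicator hNm]
    simp [hN0]
  have hBm : ∀ i, MeasurableSet (A ∩ B i) := fun i => (hA.inter Metric.isOpen_ball).measurableSet
  have hBz : ∀ i, ZeroMod μ {γ : Curve X | γ.integral ((A ∩ B i).indicator g') = ∞} := by
    intro i
    refine zeroMod_of_fun (hg'm.indicator (hBm i)) ?_
    rw [lintegral_indicator (hBm i)]
    refine lt_of_le_of_lt (le_of_eq ?_) (hri (c i) (hcA i))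
    exact lintegral_congr_ae ((ae_restrict_of_ae hgg').mono fun x hx => hx.symm)
  refine ((zeroMod_of_fun hρm hρi).union (hNz.union (ZeroMod.iUnion hBz))).mono ?_
  rintro γ ⟨hin, hne⟩
  by_contra hcon
  simp only [Set.mem_union, Set.mem_iUnion, Set.mem_ofPred_eq, not_or, not_exists] at hcon
  obtain ⟨h0, h1, h2⟩ := hcon
  apply hne
  have hcont := γ.lipschitz_ext.continuous
  have hmeas := hcont.measurable
  -- representative agrees along the curve
  have hag : ∀ᵐ t ∂((volume : Measure ℝ).restrict (Set.Icc 0 γ.len)),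
      g (γ.ext t) = g' (γ.ext t) := by
    rw [γ.integral_eq] at h1
    have h3 := ae_lt_top ((measurable_const.indicator hNm).comp hmeas) h1
    filter_upwards [h3] with t ht
    by_contra hx
    have : γ.ext t ∈ N := hNs hx
    simp [this] at ht
  -- inequality on subcurves
  have hsub : ∀ a b : ℝ, 0 ≤ a → a ≤ b → b ≤ γ.len →
      ENNReal.ofReal |u (γ.ext a) - u (γ.ext b)| ≤ ∫⁻ t in Set.Icc a b, g' (γ.ext t) := by
    intro a b ha hab hb
    have hss : Set.Icc a b ⊆ Set.Icc 0 γ.len := Set.Icc_subset_Icc ha hb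
    have hU : UGIneq u g (γ.sub a b hab) := by
      by_contra hU
      have h4 := hρ (γ.sub a b hab) ⟨fun s _ => γ.ext_mem hin _, hU⟩
      rw [γ.sub_integral] at h4
      rw [γ.integral_eq] at h0
      exact h0 (top_unique (h4 ▸ lintegral_mono_set hss))
    unfold UGIneq at hU
    rw [γ.sub_integral] at hU
    have e1 : (γ.sub a b hab).toFun 0 = γ.ext a := by simp [Curve.sub]
    have e2 : (γ.sub a b hab).toFun (γ.sub a b hab).len = γ.ext b := by simp [Curve.sub]
    rw [e1, e2] at hU
    refine hU.trans (le_of_eq (lintegral_congr_ae ?_))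
    exact ae_mono (Measure.restrict_mono hss le_rfl) hag
  -- Lebesgue differentiation
  set F : ℕ → ℝ → ℝ≥0∞ := fun i => (Set.Icc 0 γ.len).indicator
    (fun t => (A ∩ B i).indicator g' (γ.ext t)) with hF
  have hFm : ∀ i, Measurable (F i) := fun i =>
    ((hg'm.indicator (hBm i)).comp hmeas).indicator measurableSet_Icc
  have hFi : ∀ i, ∫⁻ t, F i t ≠ ∞ := by
    intro i
    have := h2 i
    rw [γ.integral_eq] at this
    rw [hF]
    simp only
    rwa [lintegral_indicator measurableSet_Icc]
  have hFint : ∀ i, Integrable (fun t => (F i t).toReal) := fun i =>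
    integrable_toReal_of_lintegral_ne_top (hFm i).aemeasurable (hFi i)
  have hder : ∀ᵐ t : ℝ, ∀ i, HasDerivAt (fun x => ∫ s in (0:ℝ)..x, (F i s).toReal)
      (F i t).toReal t := by
    rw [ae_all_iff]
    intro i
    filter_upwards [LocallyIntegrable.ae_hasDerivAt_integral (hFint i).locallyIntegrable] with t ht using ht 0
  have hfin : ∀ᵐ t : ℝ, ∀ i, F i t < ∞ := by
    rw [ae_all_iff]
    exact fun i => ae_lt_top (hFm i) (hFi i)
  have hIoo : ∀ᵐ t ∂((volume : Measure ℝ).restrict (Set.Icc 0 γ.len)), t ∈ Set.Ioo 0 γ.len := by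
    rw [← restrict_Ioo_eq_restrict_Icc]
    exact ae_restrict_mem measurableSet_Ioo
  filter_upwards [hag, ae_restrict_of_ae hder, ae_restrict_of_ae hfin, hIoo] with t hagt hdt hft hIt
  obtain ⟨i, hi⟩ := hcov _ (γ.ext_mem hin t)
  have hFt : F i t = g' (γ.ext t) := by
    simp only [hF]
    rw [Set.indicator_of_mem (Set.Ioo_subset_Icc_self hIt),
      Set.indicator_of_mem (show γ.ext t ∈ A ∩ B i from ⟨γ.ext_mem hin t, hi⟩)]
  rw [hagt, ← hFt, ← ENNReal.ofReal_toReal (hft i).ne]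
  refine ENNReal.ofReal_le_ofReal (deriv_le_of_local (hdt i) ?_ ENNReal.toReal_nonneg)
  have hopen : IsOpen (Set.Ioo 0 γ.len ∩ γ.ext ⁻¹' (B i)) :=
    isOpen_Ioo.inter (Metric.isOpen_ball.preimage hcont)
  obtain ⟨δ, hδ, hδs⟩ := Metric.isOpen_iff.1 hopen t ⟨hIt, hi⟩
  have hev : ∀ᶠ s in 𝓝[>] t, s ∈ Set.Ioo t (t + δ) := Ioo_mem_nhdsGT (by linarith)
  filter_upwards [hev] with s hs
  have hall : ∀ x ∈ Set.Icc t s, x ∈ Set.Ioo 0 γ.len ∩ γ.ext ⁻¹' (B i) := by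
    intro x hx
    apply hδs
    rw [Metric.mem_ball, Real.dist_eq, abs_lt]
    constructor <;> linarith [hx.1, hx.2, hs.2]
  have hs1 := hsub t s hIt.1.le hs.1.le (hall s ⟨hs.1.le, le_rfl⟩).1.2.le
  have e3 : ∫⁻ x in Set.Icc t s, g' (γ.ext x) = ∫⁻ x in Set.Icc t s, F i x := by
    refine setLIntegral_congr_fun measurableSet_Icc fun x hx => ?_
    have hx' := hall x hx
    simp only [hF]
    rw [Set.indicator_of_mem (Set.Ioo_subset_Icc_self hx'.1),
      Set.indicator_of_mem (show γ.ext x ∈ A ∩ B i from ⟨γ.ext_mem hin x, hx'.2⟩)]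
  have e4 : (∫ x in (0:ℝ)..s, (F i x).toReal) - (∫ x in (0:ℝ)..t, (F i x).toReal)
      = (∫⁻ x in Set.Icc t s, F i x).toReal := by
    rw [intervalIntegral.integral_interval_sub_left (hFint i).intervalIntegrable
      (hFint i).intervalIntegrable, intervalIntegral.integral_of_le hs.1.le,
      ← integral_Icc_eq_integral_Ioc,
      integral_toReal (hFm i).aemeasurable (ae_restrict_of_ae (ae_lt_top (hFm i) (hFi i)))]
  rw [e4, abs_sub_comm]
  rw [e3] at hs1
  have hne' : ∫⁻ x in Set.Icc t s, F i x ≠ ∞ :=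
    ne_top_of_le_ne_top (hFi i) (setLIntegral_le_lintegral _ _)
  rwa [ENNReal.ofReal_le_iff_le_toReal hne'] at hs1

theorem Strong.iInf {μ : Measure X} {u : X → ℝ} {g : ℕ → X → ℝ≥0∞} {A : Set X}
    (h : ∀ n, Strong μ u (g n) A) : Strong μ u (fun x => ⨅ n, g n x) A := by
  refine ⟨AEMeasurable.iInf fun n => (h n).1, (ZeroMod.iUnion fun n => (h n).2).mono ?_⟩
  rintro γ ⟨hin, hne⟩
  by_contra hcon
  simp only [Set.mem_iUnion, Set.mem_ofPred_eq, not_exists, not_and, not_not] at hcon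
  apply hne
  have := ae_all_iff.2 fun n => hcon n hin
  filter_upwards [this] with t ht
  exact le_iInf ht

theorem Strong.min {μ : Measure X} {u : X → ℝ} {g g' : X → ℝ≥0∞} {A : Set X}
    (h : Strong μ u g A) (h' : Strong μ u g' A) : Strong μ u (fun x => min (g x) (g' x)) A := by
  refine ⟨h.1.min h'.1, (h.2.union h'.2).mono ?_⟩
  rintro γ ⟨hin, hne⟩
  by_contra hcon
  simp only [Set.mem_union, Set.mem_ofPred_eq, not_or, not_and, not_not] at hcon
  apply hne
  filter_upwards [hcon.1 hin, hcon.2 hin] with t ht ht'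
  exact le_min ht ht'

theorem strong_top {μ : Measure X} {u : X → ℝ} {A : Set X} : Strong μ u (fun _ => ∞) A :=
  ⟨aemeasurable_const, (zeroMod_of_fun (ρ := fun _ => 0) measurable_const (by simp)).mono
    (by rintro γ ⟨-, hne⟩; simp at hne)⟩

theorem exists_minimal_strong (μ : Measure X) [SigmaFinite μ] (u : X → ℝ) (A : Set X) :
    ∃ g, Strong μ u g A ∧ ∀ g', Strong μ u g' A → ∀ᵐ x ∂(μ.restrict A), g x ≤ g' x := by
  set ν := (μ.restrict A).toFinite with hν
  have hνμ : ν ≪ μ := (toFinite_absolutelyContinuous _).trans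
    Measure.absolutelyContinuous_restrict
  set J : (X → ℝ≥0∞) → ℝ≥0∞ := fun g => ∫⁻ x, (1 + g x)⁻¹ ∂ν with hJ
  obtain ⟨s, -, hs, hmem⟩ := exists_seq_tendsto_sSup
    (S := J '' {g | Strong μ u g A}) ⟨_, _, strong_top, rfl⟩ (OrderTop.bddAbove _)
  choose g hg hgs using hmem
  refine ⟨_, Strong.iInf hg, fun g' hg' => ?_⟩
  set G : X → ℝ≥0∞ := fun x => ⨅ n, g n x with hG
  have hGs : Strong μ u G A := Strong.iInf hg
  have hms := hGs.min hg'
  have hsup : sSup (J '' {g | Strong μ u g A}) ≤ J G := by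
    refine le_of_tendsto' hs fun n => ?_
    rw [← hgs n]
    refine lintegral_mono fun x => ?_
    simp only
    gcongr
    exact iInf_le _ n
  have hle : J (fun x => min (G x) (g' x)) ≤ J G :=
    (le_sSup (Set.mem_image_of_mem J (show _ ∈ {g | Strong μ u g A} from hms))).trans hsup
  have hmeas : AEMeasurable (fun x => (1 + min (G x) (g' x))⁻¹) ν :=
    ((hms.1.mono_ac hνμ).const_add 1).inv
  have hfin : J G ≠ ∞ := by
    refine ne_top_of_le_ne_top (measure_ne_top ν Set.univ) ?_
    rw [← lintegral_one]
    exact lintegral_mono fun x => by simp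
  have hae := ae_eq_of_ae_le_of_lintegral_le (μ := ν) (f := fun x => (1 + G x)⁻¹)
    (g := fun x => (1 + min (G x) (g' x))⁻¹)
    (Filter.Eventually.of_forall fun x => by
      simp only
      gcongr
      exact min_le_left _ _) hfin hmeas hle
  have hae' := (absolutelyContinuous_toFinite (μ.restrict A)).ae_le hae
  filter_upwards [hae'] with x hx
  have h1 := inv_injective hx
  have h2 : G x = min (G x) (g' x) := (ENNReal.add_right_inj ENNReal.one_ne_top).1 h1
  change G x ≤ g' x
  rw [h2]
  exact min_le_right _ _

/-- A locally finite Lipschitz partition of unity, subordinate to finite unions of balls. -/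
structure PU (A : Set X) (B : ℕ → Set X) where
  φ : ℕ → X → ℝ
  L : ℕ → ℝ≥0
  lip : ∀ i, LipschitzWith (L i) (φ i)
  nonneg : ∀ i x, 0 ≤ φ i x
  sum_le : ∀ n x, ∑ i ∈ Finset.range n, φ i x ≤ 1
  supp : ∀ i x, φ i x ≠ 0 → ∃ j ∈ Finset.range (i + 1), x ∈ B j
  locfin : ∀ x ∈ A, ∃ δ > (0 : ℝ), ∃ N : ℕ, ∀ y ∈ Metric.ball x δ,
    (∀ i ≥ N, φ i y = 0) ∧ ∑ i ∈ Finset.range N, φ i y = 1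

theorem exists_PU {A : Set X} (c : ℕ → X) (r : ℕ → ℝ)
    (hcov : ∀ x ∈ A, ∃ i, x ∈ Metric.ball (c i) (r i)) :
    Nonempty (PU A (fun i => Metric.ball (c i) (r i))) := by
  let h : ℕ → X → ℝ := fun j x => max 0 (r j - dist x (c j))
  let m : ℕ → X → ℝ := fun i x => Nat.rec 0 (fun j a => max a (h j x)) i
  have m0 : ∀ x, m 0 x = 0 := fun x => rfl
  have ms : ∀ i x, m (i + 1) x = max (m i x) (h i x) := fun i x => rfl
  have hlip : ∀ j, LipschitzWith 1 (h j) := by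
    intro j
    refine LipschitzWith.of_dist_le_mul fun x y => ?_
    simp only [h, NNReal.coe_one, one_mul, Real.dist_eq]
    rw [max_comm 0, max_comm 0]
    refine (abs_max_sub_max_le_abs _ _ _).trans ?_ |>.trans (abs_dist_sub_le x y (c j))
    rw [abs_sub_comm]
    exact le_of_eq (by congr 1; ring)
  have mlip : ∀ i, LipschitzWith 1 (m i) := by
    intro i
    induction i with
    | zero => exact (LipschitzWith.const (0 : ℝ)).weaken zero_le_one
    | succ n ih =>
      have := ih.max (hlip n)
      rw [max_self] at this
      exact this
  have mmono : ∀ x, Monotone (fun i => m i x) := fun x =>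
    monotone_nat_of_le_succ fun i => by rw [ms]; exact le_max_left _ _
  have mnn : ∀ i x, 0 ≤ m i x := fun i x => by
    have := mmono x (Nat.zero_le i)
    simpa [m0] using this
  have msupp : ∀ i x, 0 < m i x → ∃ j ∈ Finset.range i, x ∈ Metric.ball (c j) (r j) := by
    intro i x
    induction i with
    | zero => intro h0; rw [m0] at h0; exact absurd h0 (lt_irrefl _)
    | succ n ih =>
      intro h0
      rw [ms, lt_max_iff] at h0
      rcases h0 with h0 | h0
      · obtain ⟨j, hj, hx⟩ := ih h0
        exact ⟨j, Finset.mem_range.2 ((Finset.mem_range.1 hj).trans (Nat.lt_succ_self n)), hx⟩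
      · refine ⟨n, Finset.self_mem_range_succ n, ?_⟩
        simp only [h, lt_max_iff, lt_irrefl, false_or] at h0
        rw [Metric.mem_ball]; linarith
  let s : ℕ → X → ℝ := fun i x => min 1 ((i : ℝ) * m i x)
  have slip : ∀ i : ℕ, LipschitzWith (i : ℝ≥0) (s i) := by
    intro i
    refine LipschitzWith.const_min (f := fun x => (i : ℝ) * m i x) ?_ 1
    refine LipschitzWith.of_dist_le_mul fun x y => ?_
    have := (mlip i).dist_le_mul x y
    rw [NNReal.coe_one, one_mul, Real.dist_eq] at this
    rw [Real.dist_eq, ← mul_sub, abs_mul, Nat.abs_cast]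
    simpa using mul_le_mul_of_nonneg_left this (Nat.cast_nonneg i)
  have smono : ∀ i x, s i x ≤ s (i + 1) x := by
    intro i x
    refine min_le_min le_rfl ?_
    have := mmono x (Nat.le_succ i)
    simp only at this
    push_cast
    have h1 := mnn i x
    have h2 := mnn (i+1) x
    have h3 : (0:ℝ) ≤ i := Nat.cast_nonneg i
    nlinarith
  have hsum : ∀ n x, ∑ i ∈ Finset.range n, (s (i + 1) x - s i x) = s n x := by
    intro n x
    rw [Finset.sum_range_sub (fun i => s i x)]
    simp [s]
  refine ⟨⟨fun i x => s (i + 1) x - s i x, fun i => ((i + 1 : ℕ) : ℝ≥0) + (i : ℝ≥0),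
    fun i => (slip (i + 1)).sub (slip i), fun i x => sub_nonneg.2 (smono i x), ?_, ?_, ?_⟩⟩
  · intro n x
    rw [hsum]
    exact min_le_left _ _
  · intro i x hx
    apply msupp
    rcases (mnn (i + 1) x).lt_or_eq with h1 | h1
    · exact h1
    · exfalso
      apply hx
      have h2 : m i x = 0 := le_antisymm (h1 ▸ mmono x (Nat.le_succ i)) (mnn i x)
      simp [s, ← h1, h2]
  · intro x hx
    obtain ⟨j, hj⟩ := hcov x hx
    rw [Metric.mem_ball] at hj
    set δ := (r j - dist x (c j)) / 2 with hδ
    have hδ0 : 0 < δ := by rw [hδ]; linarith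
    obtain ⟨n, hn⟩ := exists_nat_gt (1 / δ)
    refine ⟨δ, hδ0, max n (j + 1), fun y hy => ?_⟩
    have key : ∀ i ≥ max n (j + 1), s i y = 1 := by
      intro i hi
      apply min_eq_left
      have h1 : δ ≤ m i y := by
        have h2 : m (j + 1) y ≤ m i y := mmono y ((le_max_right _ _).trans hi)
        refine le_trans ?_ h2
        rw [ms]
        refine le_trans ?_ (le_max_right _ _)
        refine le_trans ?_ (le_max_right _ _)
        rw [Metric.mem_ball] at hy
        have := dist_triangle y x (c j)
        linarith
      have h3 : (n : ℝ) ≤ i := by exact_mod_cast (le_max_left _ _).trans hi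
      have h4 : 1 / δ ≤ i := hn.le.trans h3
      calc (1 : ℝ) = 1 / δ * δ := by field_simp
        _ ≤ i * m i y := by gcongr
    refine ⟨fun i hi => ?_, ?_⟩
    · rw [key i hi, key (i + 1) (hi.trans (Nat.le_succ i)), sub_self]
    · rw [hsum, key _ le_rfl]

theorem LocLipOn.mul {f g : X → ℝ} {A : Set X} (hf : LocLipOn f A) (hg : LocLipOn g A) :
    LocLipOn (fun x => f x * g x) A := by
  intro x hx
  obtain ⟨r, hr, K, hK⟩ := hf x hx
  obtain ⟨r', hr', K', hK'⟩ := hg x hx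
  refine ⟨min 1 (min r r'), by positivity,
    (|f x| + K).toNNReal * K' + (|g x| + K').toNNReal * K, ?_⟩
  refine LipschitzOnWith.of_dist_le_mul fun y hy z hz => ?_
  have b1 : ∀ p ∈ A ∩ Metric.ball x (min 1 (min r r')), p ∈ A ∩ Metric.ball x r := fun p hp =>
    ⟨hp.1, Metric.ball_subset_ball ((min_le_right _ _).trans (min_le_left _ _)) hp.2⟩
  have b2 : ∀ p ∈ A ∩ Metric.ball x (min 1 (min r r')), p ∈ A ∩ Metric.ball x r' := fun p hp =>
    ⟨hp.1, Metric.ball_subset_ball ((min_le_right _ _).trans (min_le_right _ _)) hp.2⟩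
  have d1 : ∀ p ∈ A ∩ Metric.ball x (min 1 (min r r')), dist p x ≤ 1 := fun p hp =>
    (Metric.mem_ball.1 hp.2).le.trans (min_le_left _ _)
  have e1 := hK.dist_le_mul y (b1 y hy) z (b1 z hz)
  have e2 := hK'.dist_le_mul y (b2 y hy) z (b2 z hz)
  have e3 := hK.dist_le_mul y (b1 y hy) x ⟨hx, Metric.mem_ball_self hr⟩
  have e4 := hK'.dist_le_mul z (b2 z hz) x ⟨hx, Metric.mem_ball_self hr'⟩
  rw [Real.dist_eq] at e1 e2 e3 e4
  have f1 : |f y| ≤ |f x| + K := by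
    have := abs_sub_abs_le_abs_sub (f y) (f x)
    have := mul_le_mul_of_nonneg_left (d1 y hy) K.coe_nonneg
    linarith
  have f2 : |g z| ≤ |g x| + K' := by
    have := abs_sub_abs_le_abs_sub (g z) (g x)
    have := mul_le_mul_of_nonneg_left (d1 z hz) K'.coe_nonneg
    linarith
  have c1 : (((|f x| + K).toNNReal : ℝ≥0) : ℝ) = |f x| + K := Real.coe_toNNReal _ (by positivity)
  have c2 : (((|g x| + K').toNNReal : ℝ≥0) : ℝ) = |g x| + K' := Real.coe_toNNReal _ (by positivity)
  push_cast
  rw [c1, c2, Real.dist_eq]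
  calc |f y * g y - f z * g z| = |f y * (g y - g z) + g z * (f y - f z)| := by congr 1; ring
    _ ≤ |f y| * |g y - g z| + |g z| * |f y - f z| := by
        rw [← abs_mul, ← abs_mul]; exact abs_add_le _ _
    _ ≤ (|f x| + K) * (K' * dist y z) + (|g x| + K') * (K * dist y z) := by gcongr
    _ = ((|f x| + K) * K' + (|g x| + K') * K) * dist y z := by ring

theorem LocLipOn.sum {f : ℕ → X → ℝ} {A : Set X} (hf : ∀ i, LocLipOn (f i) A) (n : ℕ) :
    LocLipOn (fun x => ∑ i ∈ Finset.range n, f i x) A := by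
  induction n with
  | zero =>
    intro x hx
    refine ⟨1, one_pos, 0, ?_⟩
    simp only [Finset.range_zero, Finset.sum_empty]
    exact (LipschitzWith.const (0 : ℝ)).lipschitzOnWith
  | succ n ih =>
    intro x hx
    obtain ⟨r, hr, K, hK⟩ := ih x hx
    obtain ⟨r', hr', K', hK'⟩ := hf n x hx
    refine ⟨min r r', lt_min hr hr', K + K', ?_⟩
    simp only [Finset.sum_range_succ]
    exact (hK.mono (Set.inter_subset_inter_right _ (Metric.ball_subset_ball (min_le_left _ _)))).add
      (hK'.mono (Set.inter_subset_inter_right _ (Metric.ball_subset_ball (min_le_right _ _))))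

theorem LipschitzWith.locLipOn {f : X → ℝ} {K : ℝ≥0} (h : LipschitzWith K f) (A : Set X) :
    LocLipOn f A := fun _ _ => ⟨1, one_pos, K, h.lipschitzOnWith⟩

/-- The glued function. -/
def PU.glue {A : Set X} {B : ℕ → Set X} (P : PU A B) (v : ℕ → X → ℝ) (x : X) : ℝ :=
  ∑' i, P.φ i x * v i x

theorem PU.glue_eq {A : Set X} {B : ℕ → Set X} (P : PU A B) (v : ℕ → X → ℝ) {y : X} {N : ℕ}
    (h : ∀ i ≥ N, P.φ i y = 0) : P.glue v y = ∑ i ∈ Finset.range N, P.φ i y * v i y := by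
  refine tsum_eq_sum fun i hi => ?_
  rw [h i (by simpa using hi), zero_mul]

theorem PU.glue_locLip {A : Set X} {B : ℕ → Set X} (P : PU A B) {v : ℕ → X → ℝ}
    (hv : ∀ i, LocLipOn (v i) A) : LocLipOn (P.glue v) A := by
  intro x hx
  obtain ⟨δ, hδ, N, hN⟩ := P.locfin x hx
  obtain ⟨r, hr, K, hK⟩ := LocLipOn.sum
    (fun i => (LipschitzWith.locLipOn (P.lip i) A).mul (hv i)) N x hx
  refine ⟨min δ r, lt_min hδ hr, K, ?_⟩
  intro y hy z hz
  rw [P.glue_eq v (hN y (Metric.ball_subset_ball (min_le_left _ _) hy.2)).1,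
    P.glue_eq v (hN z (Metric.ball_subset_ball (min_le_left _ _) hz.2)).1]
  exact hK ⟨hy.1, Metric.ball_subset_ball (min_le_right _ _) hy.2⟩
    ⟨hz.1, Metric.ball_subset_ball (min_le_right _ _) hz.2⟩

/-- The error term. -/
def PU.err {A : Set X} {B : ℕ → Set X} (P : PU A B) (v : ℕ → X → ℝ) (u : X → ℝ) (i : ℕ) :
    X → ℝ≥0∞ := {x | P.φ i x ≠ 0}.indicator fun x => ENNReal.ofReal |v i x - u x|

theorem PU.glue_sub_le {A : Set X} {B : ℕ → Set X} (P : PU A B) (v : ℕ → X → ℝ) (u : X → ℝ)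
    {x : X} (hx : x ∈ A) : ENNReal.ofReal |P.glue v x - u x| ≤ ∑' i, P.err v u i x := by
  obtain ⟨δ, hδ, N, hN⟩ := P.locfin x hx
  obtain ⟨h1, h2⟩ := hN x (Metric.mem_ball_self hδ)
  have e : P.glue v x - u x = ∑ i ∈ Finset.range N, P.φ i x * (v i x - u x) := by
    rw [P.glue_eq v h1]
    simp only [mul_sub, Finset.sum_sub_distrib, ← Finset.sum_mul, h2, one_mul]
  rw [e]
  refine (ENNReal.ofReal_le_ofReal (Finset.abs_sum_le_sum_abs _ _)).trans ?_
  rw [ENNReal.ofReal_sum_of_nonneg (fun _ _ => abs_nonneg _)]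
  refine le_trans (Finset.sum_le_sum fun i _ => ?_) (ENNReal.sum_le_tsum (Finset.range N))
  unfold PU.err
  by_cases h0 : P.φ i x = 0
  · simp [h0]
  · rw [Set.indicator_of_mem (show x ∈ {x | P.φ i x ≠ 0} from h0)]
    refine ENNReal.ofReal_le_ofReal ?_
    rw [abs_mul, abs_of_nonneg (P.nonneg i x)]
    have : P.φ i x ≤ 1 := (Finset.single_le_sum (fun j _ => P.nonneg j x)
      (Finset.self_mem_range_succ i)).trans (P.sum_le (i + 1) x)
    exact mul_le_of_le_one_left (abs_nonneg _) this

/-- The candidate gradient. -/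
def PU.grad {A : Set X} {B : ℕ → Set X} (P : PU A B) (v : ℕ → X → ℝ) (g : ℕ → X → ℝ≥0∞)
    (u : X → ℝ) : X → ℝ≥0∞ :=
  A.indicator fun x => ∑' i, (ENNReal.ofReal (P.φ i x) * g i x + P.L i * P.err v u i x)

theorem PU.err_meas {A : Set X} (hA : IsOpen A) {B : ℕ → Set X} (P : PU A B) {v : ℕ → X → ℝ}
    (hv : ∀ i, LocLipOn (v i) A) {μ : Measure X} {u : X → ℝ}
    (hu : AEMeasurable u (μ.restrict A)) (i : ℕ) :
    AEMeasurable (P.err v u i) (μ.restrict A) := by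
  have h1 : AEMeasurable (v i) (μ.restrict A) := (hv i).continuousOn.aemeasurable hA.measurableSet
  refine AEMeasurable.indicator ?_ ?_
  · exact ENNReal.measurable_ofReal.comp_aemeasurable
      (continuous_abs.measurable.comp_aemeasurable (h1.sub hu))
  · exact (isOpen_ne_fun (P.lip i).continuous continuous_const).measurableSet

theorem PU.grad_meas {A : Set X} (hA : IsOpen A) {B : ℕ → Set X} (P : PU A B) {v : ℕ → X → ℝ}
    (hv : ∀ i, LocLipOn (v i) A) {μ : Measure X} {u : X → ℝ} {g : ℕ → X → ℝ≥0∞}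
    (hg : ∀ i, AEMeasurable (g i) μ)
    (hu : AEMeasurable u (μ.restrict A)) : AEMeasurable (P.grad v g u) μ := by
  unfold PU.grad
  rw [aemeasurable_indicator_iff hA.measurableSet]
  refine AEMeasurable.tsum fun i => AEMeasurable.add ?_ ?_
  · exact ((ENNReal.measurable_ofReal.comp (P.lip i).continuous.measurable).aemeasurable).mul
      (hg i).restrict
  · exact (P.err_meas hA hv hu i).const_mul _

theorem PU.glue_strong {A : Set X} (hA : IsOpen A) {B : ℕ → Set X} (P : PU A B) {v : ℕ → X → ℝ}
    (hv : ∀ i, LocLipOn (v i) A) {μ : Measure X} {u : X → ℝ} {g : ℕ → X → ℝ≥0∞}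
    (hg : ∀ i, Strong μ (v i) (g i) A)
    (hu : AEMeasurable u (μ.restrict A)) : Strong μ (P.glue v) (P.grad v g u) A := by
  refine ⟨P.grad_meas hA hv (fun i => (hg i).1) hu, (ZeroMod.iUnion fun n => (hg n).2).mono ?_⟩
  rintro γ ⟨hin, hne⟩
  by_contra hcon
  simp only [Set.mem_iUnion, Set.mem_ofPred_eq, not_exists, not_and, not_not] at hcon
  apply hne
  have hcont := γ.lipschitz_ext.continuous
  have h1 := ae_all_iff.2 fun n => hcon n hin
  have h2 : ∀ᵐ t : ℝ, ∀ i, DifferentiableAt ℝ (fun s => v i (γ.ext s)) t := by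
    rw [ae_all_iff]
    intro i
    obtain ⟨K, hK⟩ := (hv i).lip_comp γ hin
    exact hK.ae_differentiableAt_real
  have hφl : ∀ i, LipschitzWith (P.L i) (fun s => P.φ i (γ.ext s)) := fun i => by
    have := (P.lip i).comp γ.lipschitz_ext
    rwa [mul_one] at this
  have h3 : ∀ᵐ t : ℝ, ∀ i, DifferentiableAt ℝ (fun s => P.φ i (γ.ext s)) t := by
    rw [ae_all_iff]
    exact fun i => (hφl i).ae_differentiableAt_real
  filter_upwards [h1, ae_restrict_of_ae h2, ae_restrict_of_ae h3] with t h1 h2 h3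
  have hxA := γ.ext_mem hin t
  obtain ⟨δ, hδ, N, hN⟩ := P.locfin _ hxA
  have hnear : ∀ᶠ s in 𝓝 t, γ.ext s ∈ Metric.ball (γ.ext t) δ :=
    hcont.continuousAt.eventually (Metric.ball_mem_nhds _ hδ)
  have hw : HasDerivAt (fun s => P.glue v (γ.ext s)) (∑ i ∈ Finset.range N,
      (deriv (fun s => P.φ i (γ.ext s)) t * v i (γ.ext t)
        + P.φ i (γ.ext t) * deriv (fun s => v i (γ.ext s)) t)) t := by
    have h4 : HasDerivAt (fun s => ∑ i ∈ Finset.range N, P.φ i (γ.ext s) * v i (γ.ext s))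
        (∑ i ∈ Finset.range N, (deriv (fun s => P.φ i (γ.ext s)) t * v i (γ.ext t)
        + P.φ i (γ.ext t) * deriv (fun s => v i (γ.ext s)) t)) t :=
      HasDerivAt.fun_sum fun i _ => (h3 i).hasDerivAt.mul (h2 i).hasDerivAt
    refine h4.congr_of_eventuallyEq ?_
    filter_upwards [hnear] with s hs
    exact P.glue_eq v (hN _ hs).1
  have hz : ∑ i ∈ Finset.range N, deriv (fun s => P.φ i (γ.ext s)) t = 0 := by
    have h4 : HasDerivAt (fun s => ∑ i ∈ Finset.range N, P.φ i (γ.ext s))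
        (∑ i ∈ Finset.range N, deriv (fun s => P.φ i (γ.ext s)) t) t :=
      HasDerivAt.fun_sum fun i _ => (h3 i).hasDerivAt
    have h5 : HasDerivAt (fun s => ∑ i ∈ Finset.range N, P.φ i (γ.ext s)) 0 t := by
      refine (hasDerivAt_const t (1 : ℝ)).congr_of_eventuallyEq ?_
      filter_upwards [hnear] with s hs
      exact (hN _ hs).2
    exact h4.unique h5
  have hd : deriv (fun s => P.glue v (γ.ext s)) t = ∑ i ∈ Finset.range N,
      (P.φ i (γ.ext t) * deriv (fun s => v i (γ.ext s)) t
        + deriv (fun s => P.φ i (γ.ext s)) t * (v i (γ.ext t) - u (γ.ext t))) := by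
    rw [hw.deriv]
    simp only [mul_sub, Finset.sum_add_distrib, Finset.sum_sub_distrib, ← Finset.sum_mul, hz]
    ring
  rw [hd]
  unfold PU.grad
  rw [Set.indicator_of_mem hxA]
  refine (ENNReal.ofReal_le_ofReal (Finset.abs_sum_le_sum_abs _ _)).trans ?_
  rw [ENNReal.ofReal_sum_of_nonneg (fun _ _ => abs_nonneg _)]
  refine le_trans (Finset.sum_le_sum fun i _ => ?_) (ENNReal.sum_le_tsum (Finset.range N))
  refine (ENNReal.ofReal_le_ofReal (abs_add_le _ _)).trans ?_
  rw [ENNReal.ofReal_add (abs_nonneg _) (abs_nonneg _)]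
  refine add_le_add ?_ ?_
  · rw [abs_mul, abs_of_nonneg (P.nonneg _ _), ENNReal.ofReal_mul (P.nonneg _ _)]
    gcongr
    exact h1 i
  · rw [abs_mul, ENNReal.ofReal_mul (abs_nonneg _)]
    unfold PU.err
    by_cases h0 : P.φ i (γ.ext t) = 0
    · have hmin : IsLocalMin (fun s => P.φ i (γ.ext s)) t :=
        Filter.Eventually.of_forall fun s => by
          simp only [h0]; exact P.nonneg _ _
      rw [hmin.deriv_eq_zero]
      simp
    · rw [Set.indicator_of_mem (show γ.ext t ∈ {x | P.φ i x ≠ 0} from h0)]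
      gcongr
      have h6 := norm_deriv_le_of_lipschitz (x₀ := t) (hφl i)
      rw [Real.norm_eq_abs] at h6
      rw [← ENNReal.ofReal_coe_nnreal]
      exact ENNReal.ofReal_le_ofReal h6

theorem exists_min_of_strong [SecondCountableTopology X] {μ : Measure X} [SigmaFinite μ]
    {Ω : Set X} (hΩ : IsOpen Ω) {w : X → ℝ} (hw : LocLipOn w Ω) :
    ∃ g, IsMinimalWUG μ w g Ω ∧ ∀ G, Strong μ w G Ω → ∫⁻ x in Ω, g x ∂μ ≤ ∫⁻ x in Ω, G x ∂μ := by
  obtain ⟨g, hg, hmin⟩ := exists_minimal_strong μ w Ω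
  exact ⟨g, ⟨hg.weak hw, fun g' hg' hl => hmin g' (hg'.strong hΩ hl)⟩,
    fun G hG => lintegral_mono_ae (hmin G hG)⟩

theorem key_approx (μ : Measure X) [SecondCountableTopology X] [SigmaFinite μ]
    (Ω : Set X) (hΩ : IsOpen Ω) (u : X → ℝ)
    (hu : AEMeasurable u (μ.restrict Ω)) (T ε : ℝ≥0∞) (hT : tvOpen μ Ω u < T) (hTf : T ≠ ∞)
    (hε : ε ≠ 0) :
    ∃ (w : X → ℝ) (g : X → ℝ≥0∞), LocLipOn w Ω ∧ IsMinimalWUG μ w g Ω ∧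
      ∫⁻ x in Ω, ENNReal.ofReal |w x - u x| ∂μ ≤ ε ∧ ∫⁻ x in Ω, g x ∂μ ≤ T + (ε + ε) := by
  rcases Set.eq_empty_or_nonempty Ω with hΩe | hΩne
  · have hw : LocLipOn (fun _ => (0 : ℝ)) Ω := by rw [hΩe]; intro x hx; exact hx.elim
    obtain ⟨g, hg, -⟩ := exists_min_of_strong (μ := μ) hΩ hw
    exact ⟨_, g, hw, hg, by simp [hΩe], by simp [hΩe]⟩
  unfold tvOpen at hT
  simp only [iInf_lt_iff] at hT
  obtain ⟨v, g, hv, hg, hconv, hlim⟩ := hT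
  have hfreq : ∃ᶠ k in atTop, ∫⁻ x in Ω, g k x ∂μ < T := frequently_lt_of_liminf_lt (by isBoundedDefault) hlim
  -- cover
  choose! r hr hri using hconv
  obtain ⟨S, hSΩ, hSc, hScov⟩ := TopologicalSpace.countable_cover_nhdsWithin
    (s := Ω) (f := fun x => Metric.ball x (r x))
    (fun x hx => mem_nhdsWithin_of_mem_nhds (Metric.ball_mem_nhds x (hr x hx)))
  have hSne : S.Nonempty := by
    obtain ⟨x, hx⟩ := hΩne
    obtain ⟨y, hy, -⟩ := Set.mem_iUnion₂.1 (hScov hx)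
    exact ⟨y, hy⟩
  obtain ⟨c, hc⟩ := hSc.exists_eq_range hSne
  have hcΩ : ∀ i, c i ∈ Ω := fun i => hSΩ (hc ▸ ⟨i, rfl⟩)
  have hcov : ∀ x ∈ Ω, ∃ i, x ∈ Metric.ball (c i) (r (c i)) := by
    intro x hx
    obtain ⟨y, hy, hxy⟩ := Set.mem_iUnion₂.1 (hScov hx)
    rw [hc] at hy
    obtain ⟨i, rfl⟩ := hy
    exact ⟨i, hxy⟩
  obtain ⟨P⟩ := exists_PU c (fun i => r (c i)) hcov
  -- ultrafilter
  let F : Filter ℕ := atTop ⊓ 𝓟 {k | ∫⁻ x in Ω, g k x ∂μ < T}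
  have hF : F.NeBot := by
    rw [← frequently_mem_iff_neBot]; exact hfreq
  let 𝒰 : Ultrafilter ℕ := Ultrafilter.of F
  have hUF : (𝒰 : Filter ℕ) ≤ F := Ultrafilter.of_le F
  have hUtop : (𝒰 : Filter ℕ) ≤ atTop := hUF.trans inf_le_left
  have hUgood : ∀ᶠ k in (𝒰 : Filter ℕ), ∫⁻ x in Ω, g k x ∂μ < T :=
    hUF (mem_inf_of_right (mem_principal_self _))
  let I : ℕ → ℕ → ℝ≥0∞ := fun i k => ∫⁻ x in Ω, ENNReal.ofReal (P.φ i x) * g k x ∂μ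
  have hlims : ∀ i, ∃ l, Tendsto (I i) (𝒰 : Filter ℕ) (𝓝 l) := by
    intro i
    obtain ⟨l, -, hl⟩ := isCompact_univ.ultrafilter_le_nhds (𝒰.map (I i)) (by simp)
    exact ⟨l, hl⟩
  choose l hl using hlims
  have hφm : ∀ i, Measurable (fun x => ENNReal.ofReal (P.φ i x)) := fun i =>
    ENNReal.measurable_ofReal.comp (P.lip i).continuous.measurable
  have hgm : ∀ k, AEMeasurable (g k) (μ.restrict Ω) := fun k => (hg k).1.1.restrict
  have hmul : ∀ i k, AEMeasurable (fun x => ENNReal.ofReal (P.φ i x) * g k x) (μ.restrict Ω) :=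
    fun i k => (hφm i).aemeasurable.mul (hgm k)
  have hsuml : ∀ n, ∑ i ∈ Finset.range n, l i ≤ T := by
    intro n
    refine le_of_tendsto (tendsto_finsetSum (Finset.range n) fun i _ => hl i) ?_
    filter_upwards [hUgood] with k hk
    refine le_trans ?_ hk.le
    simp only [I]
    rw [← lintegral_finsetSum' _ (fun i _ => hmul i k)]
    refine lintegral_mono fun x => ?_
    rw [← Finset.sum_mul, ← ENNReal.ofReal_sum_of_nonneg (fun i _ => P.nonneg i x)]
    refine mul_le_of_le_one_left (zero_le) ?_
    rw [← ENNReal.ofReal_one]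
    exact ENNReal.ofReal_le_ofReal (P.sum_le n x)
  have htsl : ∑' i, l i ≤ T := ENNReal.tsum_le_of_sum_range_le hsuml
  have hlfin : ∀ i, l i ≠ ∞ := fun i => ne_top_of_le_ne_top hTf ((ENNReal.le_tsum i).trans htsl)
  obtain ⟨e, he, hesum⟩ := ENNReal.exists_pos_sum_of_countable' hε ℕ
  let D : ℕ → ℕ → ℝ≥0∞ := fun i k => ∑ j ∈ Finset.range (i + 1),
    ∫⁻ y in Ω ∩ Metric.ball (c j) (r (c j)), ENNReal.ofReal |v k y - u y| ∂μ
  have hD : ∀ i, Tendsto (D i) (𝒰 : Filter ℕ) (𝓝 0) := by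
    intro i
    have := tendsto_finsetSum (Finset.range (i + 1)) fun j _ => (hri (c j) (hcΩ j)).mono_left hUtop
    simpa using this
  have hchoose : ∀ i, ∃ k, ∫⁻ x in Ω, g k x ∂μ < T ∧ I i k ≤ l i + e i ∧
      D i k ≤ e i ∧ (P.L i : ℝ≥0∞) * D i k ≤ e i := by
    intro i
    have h1 : ∀ᶠ k in (𝒰 : Filter ℕ), I i k < l i + e i :=
      (hl i).eventually_lt_const (ENNReal.lt_add_right (hlfin i) (he i).ne')
    have h2 : ∀ᶠ k in (𝒰 : Filter ℕ), D i k < e i := (hD i).eventually_lt_const (he i)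
    have h3 : Tendsto (fun k => (P.L i : ℝ≥0∞) * D i k) (𝒰 : Filter ℕ) (𝓝 0) := by
      have := ENNReal.Tendsto.const_mul (hD i) (Or.inr (ENNReal.coe_ne_top (r := P.L i)))
      simpa using this
    obtain ⟨k, a1, a2, a3, a4⟩ :=
      (hUgood.and (h1.and (h2.and (h3.eventually_lt_const (he i))))).exists
    exact ⟨k, a1, a2.le, a3.le, a4.le⟩
  choose k hk1 hk2 hk3 hk4 using hchoose
  let V : ℕ → X → ℝ := fun i => v (k i)
  let G : ℕ → X → ℝ≥0∞ := fun i => g (k i)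
  have hV : ∀ i, LocLipOn (V i) Ω := fun i => hv (k i)
  have hGs : ∀ i, Strong μ (V i) (G i) Ω := fun i =>
    (hg (k i)).1.strong hΩ fun x _ => ⟨1, one_pos,
      (lintegral_mono_set Set.inter_subset_left).trans_lt ((hk1 i).trans hTf.lt_top)⟩
  have hst := P.glue_strong hΩ hV hGs hu
  have hwl := P.glue_locLip hV
  have herr : ∀ i, ∫⁻ x in Ω, P.err V u i x ∂μ ≤ D i (k i) := by
    intro i
    have hm : AEMeasurable (fun x => ENNReal.ofReal |V i x - u x|) (μ.restrict Ω) :=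
      ENNReal.measurable_ofReal.comp_aemeasurable (continuous_abs.measurable.comp_aemeasurable
        (((hV i).continuousOn.aemeasurable hΩ.measurableSet).sub hu))
    have hDe : D i (k i) = ∫⁻ x in Ω, ∑ j ∈ Finset.range (i + 1),
        (Metric.ball (c j) (r (c j))).indicator (fun x => ENNReal.ofReal |V i x - u x|) x ∂μ := by
      rw [lintegral_finsetSum' _ (fun j _ => hm.indicator Metric.isOpen_ball.measurableSet)]
      refine Finset.sum_congr rfl fun j _ => ?_
      rw [setLIntegral_indicator Metric.isOpen_ball.measurableSet, Set.inter_comm]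
    rw [hDe]
    refine lintegral_mono fun x => ?_
    unfold PU.err
    by_cases h0 : P.φ i x = 0
    · simp [h0]
    · obtain ⟨j, hj, hx⟩ := P.supp i x h0
      rw [Set.indicator_of_mem (show x ∈ {x | P.φ i x ≠ 0} from h0)]
      refine le_trans ?_ (Finset.single_le_sum (fun _ _ => zero_le) hj)
      rw [Set.indicator_of_mem hx]
  obtain ⟨gm, hgmin, hgle⟩ := exists_min_of_strong (μ := μ) hΩ hwl
  refine ⟨P.glue V, gm, hwl, hgmin, ?_, (hgle _ hst).trans ?_⟩
  · calc ∫⁻ x in Ω, ENNReal.ofReal |P.glue V x - u x| ∂μ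
        ≤ ∫⁻ x in Ω, ∑' i, P.err V u i x ∂μ :=
          setLIntegral_mono' hΩ.measurableSet fun x hx => P.glue_sub_le V u hx
      _ = ∑' i, ∫⁻ x in Ω, P.err V u i x ∂μ := lintegral_tsum fun i => P.err_meas hΩ hV hu i
      _ ≤ ∑' i, e i := ENNReal.tsum_le_tsum fun i => (herr i).trans (hk3 i)
      _ ≤ ε := hesum.le
  · calc ∫⁻ x in Ω, P.grad V G u x ∂μ
        = ∫⁻ x in Ω, ∑' i, (ENNReal.ofReal (P.φ i x) * G i x + P.L i * P.err V u i x) ∂μ := by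
          refine setLIntegral_congr_fun hΩ.measurableSet fun x hx => ?_
          unfold PU.grad
          exact Set.indicator_of_mem hx _
      _ = ∑' i, ∫⁻ x in Ω, (ENNReal.ofReal (P.φ i x) * G i x + P.L i * P.err V u i x) ∂μ :=
          lintegral_tsum fun i => ((hφm i).aemeasurable.mul (hgm (k i))).add
            ((P.err_meas hΩ hV hu i).const_mul _)
      _ ≤ ∑' i, (l i + (e i + e i)) := by
          refine ENNReal.tsum_le_tsum fun i => ?_
          change ∫⁻ x in Ω, (ENNReal.ofReal (P.φ i x) * g (k i) x + P.L i * P.err V u i x) ∂μ ≤ _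
          rw [lintegral_add_left' (hmul i (k i)),
            lintegral_const_mul'' _ (P.err_meas hΩ hV hu i), ← add_assoc]
          exact add_le_add (hk2 i) ((mul_le_mul_right (herr i) _).trans (hk4 i))
      _ = ∑' i, l i + (∑' i, e i + ∑' i, e i) := by
          rw [ENNReal.tsum_add, ENNReal.tsum_add]
      _ ≤ T + (ε + ε) := add_le_add htsl (add_le_add hesum.le hesum.le)

/-- `L¹`-approximation by locally Lipschitz functions: if `Ω` is open
and `u ∈ L¹_loc(Ω)` with `‖Du‖(Ω) < ∞`, then there is a sequence `(w_i)` of locally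
Lipschitz functions on `Ω` with `w_i - u → 0` in `L¹(Ω)` and
`∫_Ω g_{w_i} dμ → ‖Du‖(Ω)`, where `g_{w_i}` is the minimal `1`-weak upper gradient
of `w_i` in `Ω`. -/
theorem exists_loclip_strict_approximation
    (μ : Measure X) (hcomp : CompleteSpace X)
    (hdoub : ∃ Cd : ℝ, Doubling μ Cd) (hpoin : ∃ CP lam : ℝ, Poincare μ CP lam)
    (Ω : Set X) (hΩ : IsOpen Ω) (u : X → ℝ)
    (hu : MemL1Loc μ Ω u) (hfin : tvOpen μ Ω u < ∞) :
    ∃ (w : ℕ → X → ℝ) (g : ℕ → X → ℝ≥0∞),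
      (∀ i, LocLipOn (w i) Ω) ∧
      (∀ i, IsMinimalWUG μ (w i) (g i) Ω) ∧
      Filter.Tendsto (fun i => ∫⁻ x in Ω, ENNReal.ofReal |w i x - u x| ∂μ)
        Filter.atTop (𝓝 0) ∧
      Filter.Tendsto (fun i => ∫⁻ x in Ω, g i x ∂μ) Filter.atTop (𝓝 (tvOpen μ Ω u)) := by
  have hsc := secondCountable_of_doubling μ hdoub
  have hsf := sigmaFinite_of_doubling μ hdoub
  set τ := tvOpen μ Ω u with hτ
  let e : ℕ → ℝ≥0∞ := fun n => ((n : ℝ≥0∞) + 1)⁻¹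
  have he0 : ∀ n, e n ≠ 0 := fun n =>
    ENNReal.inv_ne_zero.2 (ENNReal.add_ne_top.2 ⟨ENNReal.natCast_ne_top n, ENNReal.one_ne_top⟩)
  have hetop : ∀ n, e n ≠ ∞ := fun n => ENNReal.inv_ne_top.2 (by simp)
  have helim : Tendsto e atTop (𝓝 0) := by
    have h := (tendsto_add_atTop_iff_nat 1).2 ENNReal.tendsto_inv_nat_nhds_zero
    refine h.congr fun n => ?_
    simp [e]
  have hex := fun n => key_approx μ Ω hΩ u hu.1 (τ + e n) (e n)
    (ENNReal.lt_add_right hfin.ne (he0 n)) (ENNReal.add_ne_top.2 ⟨hfin.ne, hetop n⟩) (he0 n)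
  choose w g hw hg h1 h2 using hex
  have hL1 : Tendsto (fun i => ∫⁻ x in Ω, ENNReal.ofReal |w i x - u x| ∂μ) atTop (𝓝 0) :=
    tendsto_of_tendsto_of_tendsto_of_le_of_le tendsto_const_nhds helim (fun _ => zero_le) h1
  refine ⟨w, g, hw, hg, hL1, ?_⟩
  have hloc : L1LocConv μ Ω w u := by
    intro x hx
    refine ⟨1, one_pos, ?_⟩
    exact tendsto_of_tendsto_of_tendsto_of_le_of_le tendsto_const_nhds hL1 (fun _ => zero_le)
      (fun i => lintegral_mono_set Set.inter_subset_left)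
  have hlow : τ ≤ Filter.liminf (fun i => ∫⁻ x in Ω, g i x ∂μ) atTop :=
    iInf_le_of_le w (iInf_le_of_le g (iInf_le_of_le hw (iInf_le_of_le hg (iInf_le _ hloc))))
  have hup : Tendsto (fun n => τ + e n + (e n + e n)) atTop (𝓝 τ) := by
    have := (tendsto_const_nhds (x := τ)).add helim |>.add (helim.add helim)
    simpa using this
  refine tendsto_of_le_liminf_of_limsup_le hlow ?_
  rw [← hup.limsup_eq]
  exact limsup_le_limsup (Filter.Eventually.of_forall h2)

end PaperBV
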